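/- Let S = {a_1, …, a_p} be integers and define, for θ ∈ ℝ^p, D(θ) = θ_1²(θ_1−1)² + ⋯ + θ_p²(θ_p−1)² + (1 + Σ θ_i a_i)². Then there exists θ ∈ ℝ^p with D(θ) = 0 if and only if there exists a subset S' ⊆ S with Σ_{a_i∈S'} a_i = −1. -/

import Mathlib

/-- `D(θ) = Σ θᵢ²(θᵢ-1)² + (1 + Σ θᵢ aᵢ)²` has a real root iff some subset of the
integers `a₁, …, a_p` sums to `-1`. -/
theorem exists_root_iff_subset_sum_neg_one (p : ℕ) (a : Fin p → ℤ) :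
    (∃ θ : Fin p → ℝ,
        (∑ i, (θ i) ^ 2 * (θ i - 1) ^ 2) + (1 + ∑ i, θ i * (a i : ℝ)) ^ 2 = 0) ↔
    (∃ S' : Finset (Fin p), (∑ i ∈ S', a i) = -1) := by
  classical
  constructor
  · rintro ⟨θ, h⟩
    have hnn : ∀ i ∈ (Finset.univ : Finset (Fin p)), 0 ≤ (θ i) ^ 2 * (θ i - 1) ^ 2 :=
      fun i _ => by positivity
    have h1 := Finset.sum_nonneg hnn
    have h2 : 0 ≤ (1 + ∑ i, θ i * (a i : ℝ)) ^ 2 := sq_nonneg _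
    have h3 : (∑ i, (θ i) ^ 2 * (θ i - 1) ^ 2) = 0 := by linarith
    have h4 : (1 + ∑ i, θ i * (a i : ℝ)) = 0 := by
      apply pow_eq_zero_iff (two_ne_zero) |>.mp
      linarith
    have h5 := (Finset.sum_eq_zero_iff_of_nonneg hnn).mp h3
    refine ⟨Finset.univ.filter (fun i => θ i = 1), ?_⟩
    have h6 : ∑ i, θ i * (a i : ℝ) = ∑ i, (if θ i = 1 then (a i : ℝ) else 0) := by
      refine Finset.sum_congr rfl fun i hi => ?_
      have h7 := h5 i hi
      split_ifs with hc
      · rw [hc, one_mul]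
      · have h8 : θ i - 1 ≠ 0 := sub_ne_zero.mpr hc
        have h9 : θ i = 0 := by simpa [h8] using h7
        rw [h9, zero_mul]
    rw [← Finset.sum_filter] at h6
    have h10 : ((∑ i ∈ Finset.univ.filter (fun i => θ i = 1), a i : ℤ) : ℝ) = ((-1 : ℤ) : ℝ) := by
      push_cast
      linarith
    exact_mod_cast h10
  · rintro ⟨S, hS⟩
    refine ⟨fun i => if i ∈ S then 1 else 0, ?_⟩
    have h1 : ∑ i, (if i ∈ S then (1 : ℝ) else 0) * (a i : ℝ) = -1 := by
      have h2 : ((∑ i ∈ S, a i : ℤ) : ℝ) = -1 := by rw [hS]; norm_num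
      push_cast at h2
      simpa [ite_mul] using h2
    have h3 : ∑ i, (if i ∈ S then (1 : ℝ) else 0) ^ 2 * ((if i ∈ S then (1 : ℝ) else 0) - 1) ^ 2 = 0 :=
      Finset.sum_eq_zero fun i _ => by split_ifs <;> norm_num
    simp only [h1, h3]
    norm_num
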